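/- Let θ > 0, ν > 0 and x ∈ (0,1). Then lim_{k→∞} D_a log F(θ, θ−ν, θ+k, x) = 0, where D_a log F(θ, θ−ν, θ+k, x) denotes the derivative at a = θ of the function a ↦ log F(a, θ−ν, θ+k, x) and the limit is over positive integers k. -/

import Mathlib

open Filter

/-- The rising factorial (Pochhammer symbol): `(y)_j = y(y+1)⋯(y+j-1)`, `(y)_0 = 1`. -/
noncomputable def risingFactorial (y : ℝ) : ℕ → ℝ
  | 0 => 1
  | m + 1 => risingFactorial y m * (y + m)

/-- The Gaussian hypergeometric function
`F(a,b,c,x) = ∑_{j≥0} (a)_j (b)_j / ((c)_j j!) xʲ`. -/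
noncomputable def hypF (a b c x : ℝ) : ℝ :=
  ∑' j : ℕ, risingFactorial a j * risingFactorial b j /
    (risingFactorial c j * (Nat.factorial j : ℝ)) * x ^ j

lemma rf_nonneg {y : ℝ} (hy : 0 ≤ y) (j : ℕ) : 0 ≤ risingFactorial y j := by
  induction j with
  | zero => simp [risingFactorial]
  | succ m ih => simp only [risingFactorial]; positivity

lemma rf_pos {y : ℝ} (hy : 0 < y) (j : ℕ) : 0 < risingFactorial y j := by
  induction j with
  | zero => simp [risingFactorial]
  | succ m ih => simp only [risingFactorial]; positivity

lemma rf_abs_le {y B : ℝ} (h : |y| ≤ B) (j : ℕ) :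
    |risingFactorial y j| ≤ risingFactorial B j := by
  have hB : 0 ≤ B := (abs_nonneg y).trans h
  induction j with
  | zero => simp [risingFactorial]
  | succ m ih =>
    simp only [risingFactorial, abs_mul]
    have h1 : |y + m| ≤ B + m := by
      refine (abs_add_le _ _).trans ?_
      simpa using h
    exact mul_le_mul ih h1 (abs_nonneg _) (rf_nonneg hB m)

lemma rf_lip {a a' M : ℝ} (ha : |a| ≤ M) (ha' : |a'| ≤ M) (hM : 1 ≤ M) (j : ℕ) :
    |risingFactorial a j - risingFactorial a' j| ≤ j * risingFactorial M j * |a - a'| := by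
  have hB : 0 ≤ M := by linarith
  induction j with
  | zero => simp [risingFactorial]
  | succ m ih =>
    simp only [risingFactorial]
    have e : risingFactorial a m * (a + m) - risingFactorial a' m * (a' + m)
      = (risingFactorial a m - risingFactorial a' m) * (a + m)
        + risingFactorial a' m * (a - a') := by ring
    rw [e]
    have h1 : |a + m| ≤ M + m := by
      refine (abs_add_le _ _).trans ?_
      simpa using ha
    have h2 := rf_nonneg hB m
    have h3 := rf_abs_le ha' m
    calc _ ≤ |(risingFactorial a m - risingFactorial a' m) * (a + m)|
        + |risingFactorial a' m * (a - a')| := abs_add_le _ _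
      _ ≤ (m * risingFactorial M m * |a - a'|) * (M + m) + risingFactorial M m * |a - a'| := by
        rw [abs_mul, abs_mul]
        gcongr
      _ ≤ _ := by
        push_cast
        have h4 : 0 ≤ risingFactorial M m * |a - a'| := by positivity
        have h5 : (0 : ℝ) ≤ m := by positivity
        nlinarith [mul_nonneg h4 (by linarith : 0 ≤ M + m - 1)]

lemma rf_lower {M c : ℝ} (hM : 0 < M) (hc : M ≤ c) (j : ℕ) :
    c / M * risingFactorial M (j + 1) ≤ risingFactorial c (j + 1) := by
  induction j with
  | zero => simp [risingFactorial]; field_simp; exact le_rfl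
  | succ m ih =>
    rw [risingFactorial, risingFactorial.eq_def c, ← mul_assoc]
    have h0 := rf_nonneg hM.le (m+1)
    have h1 := rf_nonneg (hM.le.trans hc) (m+1)
    have h2 : 0 ≤ M + ((m + 1 : ℕ) : ℝ) := by positivity
    dsimp only
    exact mul_le_mul ih (by linarith) h2 h1

noncomputable def uu (B x : ℝ) (j : ℕ) : ℝ :=
  j * risingFactorial B j / (Nat.factorial j : ℝ) * x ^ j

lemma uu_summable {B x : ℝ} (hB : 0 < B) (hx : x ∈ Set.Ioo (0 : ℝ) 1) : Summable (uu B x) := by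
  obtain ⟨hx0, hx1⟩ := hx
  refine summable_of_ratio_test_tendsto_lt_one (l := x) hx1 ?_ ?_
  · filter_upwards [eventually_ge_atTop 1] with j hj
    have := rf_pos hB j
    have hj' : (0 : ℝ) < j := by exact_mod_cast hj
    unfold uu
    positivity
  · have h : Tendsto (fun j : ℕ => (B / (j : ℝ) + 1) * x) atTop (nhds ((0 + 1) * x)) :=
      ((tendsto_const_div_atTop_nhds_zero_nat B).add_const 1).mul_const x
    rw [zero_add, one_mul] at h
    refine h.congr' ?_
    filter_upwards [eventually_ge_atTop 1] with j hj
    have h1 := rf_pos hB j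
    have hj' : (0 : ℝ) < j := by exact_mod_cast hj
    have hf : (0 : ℝ) < (Nat.factorial j : ℝ) := by positivity
    have hBj : 0 < B + j := by positivity
    unfold uu
    rw [Real.norm_eq_abs, Real.norm_eq_abs, abs_of_pos (a := (j : ℝ) * _ / _ * _) (by positivity),
      abs_of_pos (by have := rf_pos hB (j + 1); positivity)]
    rw [show risingFactorial B (j + 1) = risingFactorial B j * (B + j) from rfl, Nat.factorial_succ, pow_succ]
    push_cast
    field_simp

noncomputable def tt (a b c x : ℝ) (j : ℕ) : ℝ :=
  risingFactorial a j * risingFactorial b j /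
    (risingFactorial c j * (Nat.factorial j : ℝ)) * x ^ j

lemma tt_lip {a a' M b B c x : ℝ} (ha : |a| ≤ M) (ha' : |a'| ≤ M) (hM : 1 ≤ M)
    (hb : |b| ≤ B) (hc : M ≤ c) (hx : 0 < x) (j : ℕ) :
    |tt a b c x j - tt a' b c x j| ≤ M / c * |a - a'| * uu B x j := by
  rcases j with _ | j
  · simp [tt, uu, risingFactorial]
  have hM0 : 0 < M := by linarith
  have hc0 : 0 < c := by linarith
  have h1 := rf_lip ha ha' hM (j+1)
  have h2 := rf_abs_le hb (j+1)
  have h3 := rf_lower hM0 hc j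
  have h4 := rf_pos hM0 (j+1)
  have h5 := rf_pos hc0 (j+1)
  have hf : (0 : ℝ) < (Nat.factorial (j+1) : ℝ) := by positivity
  have e : tt a b c x (j+1) - tt a' b c x (j+1) =
      (risingFactorial a (j+1) - risingFactorial a' (j+1)) * risingFactorial b (j+1) /
    (risingFactorial c (j+1) * (Nat.factorial (j+1) : ℝ)) * x ^ (j+1) := by
    unfold tt; ring
  rw [e, abs_mul, abs_div, abs_mul, abs_of_pos (mul_pos h5 hf), abs_of_pos (pow_pos hx (j+1))]
  have h6 := (abs_nonneg _).trans h2
  calc _ ≤ (((j+1 : ℕ) : ℝ) * risingFactorial M (j+1) * |a - a'|) * risingFactorial B (j+1) /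
        ((c / M * risingFactorial M (j+1)) * (Nat.factorial (j+1) : ℝ)) * x ^ (j+1) := by
        gcongr
    _ = _ := by
        unfold uu
        field_simp

lemma tt_zero_summable (b c x : ℝ) : HasSum (tt 0 b c x) 1 := by
  have h0 : ∀ j : ℕ, risingFactorial 0 (j+1) = 0 := by
    intro j
    induction j with
    | zero => simp [risingFactorial]
    | succ m ih => rw [risingFactorial, ih, zero_mul]
  have : tt 0 b c x 0 = 1 := by simp [tt, risingFactorial]
  rw [← this]
  refine hasSum_single 0 ?_
  intro j hj
  obtain ⟨m, rfl⟩ := Nat.exists_eq_succ_of_ne_zero hj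
  simp [tt, h0]

lemma tt_summable {a M b B c x : ℝ} (ha : |a| ≤ M) (hM : 1 ≤ M) (hB : 0 < B)
    (hb : |b| ≤ B) (hc : M ≤ c) (hx : x ∈ Set.Ioo (0 : ℝ) 1) : Summable (tt a b c x) := by
  have h := Summable.of_norm_bounded (f := fun j => tt a b c x j - tt 0 b c x j) ((uu_summable hB hx).mul_left (M / c * |a - 0|))
    (tt_lip ha (a' := 0) (by simp; linarith) hM hb hc hx.1)
  simpa using h.add (tt_zero_summable b c x).summable

lemma hyp_lip {a a' M b B c x : ℝ} (ha : |a| ≤ M) (ha' : |a'| ≤ M) (hM : 1 ≤ M) (hB : 0 < B)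
    (hb : |b| ≤ B) (hc : M ≤ c) (hx : x ∈ Set.Ioo (0 : ℝ) 1) :
    |hypF a b c x - hypF a' b c x| ≤ M / c * |a - a'| * ∑' j, uu B x j := by
  have e : hypF a b c x - hypF a' b c x = ∑' j, (tt a b c x j - tt a' b c x j) :=
    ((tt_summable ha hM hB hb hc hx).tsum_sub (tt_summable ha' hM hB hb hc hx)).symm
  rw [e, ← tsum_mul_left]
  exact tsum_of_norm_bounded (f := fun j => tt a b c x j - tt a' b c x j) ((uu_summable hB hx).mul_left _).hasSum
    (tt_lip ha ha' hM hb hc hx.1)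

lemma log_lip_aux {u v : ℝ} (hu : 1/2 ≤ u) (hv : 1/2 ≤ v) :
    Real.log u - Real.log v ≤ 2 * |u - v| := by
  have hv0 : 0 < v := by linarith
  have hu0 : 0 < u := by linarith
  rw [← Real.log_div hu0.ne' hv0.ne']
  refine (Real.log_le_sub_one_of_pos (by positivity)).trans ?_
  rw [div_sub_one hv0.ne', div_le_iff₀ hv0]
  nlinarith [le_abs_self (u - v), abs_nonneg (u - v)]

/-- `lim_{k→∞} D_a log F(θ, θ-ν, θ+k, x) = 0`, the derivative being taken at
`a = θ` of `a ↦ log F(a, θ-ν, θ+k, x)`. -/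
theorem stmt10 (θ ν x : ℝ) (hθ : 0 < θ) (hν : 0 < ν)
    (hx : x ∈ Set.Ioo (0 : ℝ) 1) :
    Tendsto
      (fun k : ℕ =>
        deriv (fun a : ℝ => Real.log (hypF a (θ - ν) (θ + (k : ℝ)) x)) θ)
      atTop (nhds 0) := by
  set b := θ - ν
  set M := θ + 1 with hMdef
  set B := |b| + 1 with hBdef
  set S := ∑' j, uu B x j
  have hM : 1 ≤ M := by linarith
  have hB : 0 < B := by positivity
  have hb : |b| ≤ B := by linarith
  have hS : 0 ≤ S := tsum_nonneg fun j => by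
    have := rf_nonneg hB.le j
    have := hx.1
    unfold uu
    positivity
  have hc : Tendsto (fun k : ℕ => θ + (k : ℝ)) atTop atTop :=
    tendsto_atTop_add_const_left _ _ tendsto_natCast_atTop_atTop
  have hd : Tendsto (fun k : ℕ => M / (θ + (k : ℝ))) atTop (nhds 0) := hc.const_div_atTop M
  have hl : Tendsto (fun k : ℕ => 2 * (M / (θ + (k : ℝ)) * S)) atTop (nhds 0) := by
    simpa using (hd.mul_const S).const_mul 2
  have hl2 : Tendsto (fun k : ℕ => M / (θ + (k : ℝ)) * M * S) atTop (nhds 0) := by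
    simpa using (hd.mul_const M).mul_const S
  refine squeeze_zero_norm' ?_ hl
  filter_upwards [hc.eventually_ge_atTop M,
    hl2.eventually_le_const (by norm_num : (0 : ℝ) < 1/2)] with k hk hk2
  have hq : 0 ≤ M / (θ + (k : ℝ)) := by positivity
  have hF : ∀ a, |a| ≤ M → 1/2 ≤ hypF a b (θ + k) x := by
    intro a ha
    have h1 := hyp_lip ha (a' := 0) (by simp; linarith) hM hB hb hk hx
    have h2 : hypF 0 b (θ + k) x = 1 := (tt_zero_summable b (θ + k) x).tsum_eq
    rw [h2, sub_zero] at h1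
    have h3 : M / (θ + (k : ℝ)) * |a| * S ≤ M / (θ + (k : ℝ)) * M * S := by gcongr
    have := (abs_le.1 h1).1
    linarith
  have hθM : |θ| ≤ M := by rw [abs_of_pos hθ]; linarith
  refine norm_deriv_le_of_lip' (by positivity) ?_
  filter_upwards [Ioo_mem_nhds (by linarith : (0 : ℝ) < θ) (by linarith : θ < M)] with a ha
  have haM : |a| ≤ M := by rw [abs_of_pos ha.1]; exact ha.2.le
  have h1 := log_lip_aux (hF a haM) (hF θ hθM)
  have h2 := log_lip_aux (hF θ hθM) (hF a haM)
  rw [abs_sub_comm] at h2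
  have h3 := hyp_lip haM hθM hM hB hb hk hx
  have h4 : |Real.log (hypF a b (θ + k) x) - Real.log (hypF θ b (θ + k) x)|
      ≤ 2 * |hypF a b (θ + k) x - hypF θ b (θ + k) x| := abs_le.2 ⟨by linarith, h1⟩
  rw [Real.norm_eq_abs, Real.norm_eq_abs]
  refine h4.trans ?_
  calc _ ≤ 2 * (M / (θ + k) * |a - θ| * S) := by linarith
    _ = _ := by ring
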